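/- For k ≥ 1, the number of signed sets that are admissible pinnacle sets of B_{2k+1} but not of D_{2k+1} equals the binomial coefficient C(2k-1, k). -/

import Mathlib

/-- The pinnacle set of a word `w : Fin n → ℤ`: values `w i` (for `0 < i < n-1`)
strictly larger than both neighbors. -/
def PinSet (n : ℕ) (w : Fin n → ℤ) : Set ℤ :=
  {x | ∃ (i : ℕ) (h0 : 0 < i) (h2 : i + 1 < n),
    w ⟨i, by omega⟩ = x ∧ w ⟨i - 1, by omega⟩ < w ⟨i, by omega⟩ ∧
      w ⟨i + 1, h2⟩ < w ⟨i, by omega⟩}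

/-- `w : Fin n → ℤ` is the one-line notation of a signed permutation of rank `n`:
the absolute values of its entries are distinct elements of `{1,...,n}`
(hence a bijection onto `{1,...,n}`). -/
def IsSignedPerm (n : ℕ) (w : Fin n → ℤ) : Prop :=
  (∀ i, 1 ≤ |w i| ∧ |w i| ≤ (n : ℤ)) ∧ Function.Injective fun i => |w i|

/-- `S` is an admissible pinnacle set of the hyperoctahedral group `B_n`. -/
def APSB (n : ℕ) (S : Finset ℤ) : Prop :=
  ∃ w : Fin n → ℤ, IsSignedPerm n w ∧ PinSet n w = ↑S

/-- `S` is an admissible pinnacle set of the type `D` group `D_n`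
(signed permutations with an even number of negative one-line entries). -/
def APSD (n : ℕ) (S : Finset ℤ) : Prop :=
  ∃ w : Fin n → ℤ, IsSignedPerm n w ∧
    Even (Finset.univ.filter fun i => w i < 0).card ∧ PinSet n w = ↑S

/-- `S` is an admissible pinnacle set of the symmetric group `S_n`
(an unsigned permutation is a signed permutation with all entries positive). -/
def APSA (n : ℕ) (S : Finset ℤ) : Prop :=
  ∃ w : Fin n → ℤ, IsSignedPerm n w ∧ (∀ i, 0 < w i) ∧ PinSet n w = ↑S

/-- `T` is an admissible pinnacle set of the totally ordered finite set `X ⊆ ℤ`: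
it is the pinnacle set of some arrangement of the elements of `X`. -/
def APSOn (X : Finset ℤ) (T : Finset ℤ) : Prop :=
  ∃ w : Fin X.card → ℤ, Function.Injective w ∧ (∀ i, w i ∈ X) ∧
    PinSet X.card w = ↑T


/-- Words with ballot condition. -/
def Qp (n c : ℤ) (d : ℕ) (T : Finset ℤ) : Prop :=
  (∀ s ∈ T, c ≤ |s| ∧ |s| ≤ n) ∧ (∀ s ∈ T, -s ∉ T) ∧ T.card = d ∧
  (∀ a, c ≤ a → a ≤ n → 2 * ((T.filter (fun s => a ≤ |s|)).card : ℤ) + a ≤ n)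

def Bp (n c : ℤ) (d : ℕ) (T : Finset ℤ) : Prop := Qp n c d T ∧ ∀ s ∈ T, s < 0

def Wp (n c : ℤ) (d : ℕ) (T : Finset ℤ) : Prop :=
  Qp n c d T ∧ ∀ s ∈ T, 0 < s → ∀ t, c ≤ t → t ≤ s → t ∈ T ∨ -t ∈ T

lemma Qp_finite (n c : ℤ) (d : ℕ) : {T | Qp n c d T}.Finite := by
  apply Set.Finite.subset (Finset.finite_toSet (Finset.Icc (-n) n).powerset)
  intro T hT
  simp only [Finset.coe_powerset, Set.mem_preimage, Set.mem_powerset_iff]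
  intro s hs
  have := (hT.1 s hs).2
  rw [abs_le] at this
  simpa using this

lemma Bp_finite (n c : ℤ) (d : ℕ) : {T | Bp n c d T}.Finite :=
  (Qp_finite n c d).subset fun _ h => h.1

lemma Wp_finite (n c : ℤ) (d : ℕ) : {T | Wp n c d T}.Finite :=
  (Qp_finite n c d).subset fun _ h => h.1

lemma Qp_notMem {n c : ℤ} {d : ℕ} {T : Finset ℤ} (h : Qp n (c+1) d T) (e : ℤ) (he : |e| = c) :
    e ∉ T := by
  intro h1
  have := (h.1 e h1).1
  omega

lemma Qp_up {n c : ℤ} {d : ℕ} {T : Finset ℤ} (hd : 2 * (d:ℤ) + c ≤ n)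
    (h : Qp n (c+1) d T) : Qp n c d T := by
  refine ⟨fun s hs => ⟨by linarith [(h.1 s hs).1], (h.1 s hs).2⟩, h.2.1, h.2.2.1, ?_⟩
  intro a ha han
  rcases eq_or_lt_of_le ha with rfl | ha
  · have := Finset.card_filter_le T (fun s => c ≤ |s|)
    rw [h.2.2.1] at this
    omega
  · exact h.2.2.2 a (by omega) han

lemma Qp_insert {n c : ℤ} {d : ℕ} {T : Finset ℤ} (hc : 1 ≤ c) (hd : 2 * ((d+1 : ℕ):ℤ) + c ≤ n)
    (h : Qp n (c+1) d T) (e : ℤ) (he : |e| = c) : Qp n c (d+1) (insert e T) := by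
  have h1 := Qp_notMem h e he
  have h2 := Qp_notMem h (-e) (by simpa using he)
  have h0 : e ≠ 0 := by rintro rfl; simp at he; omega
  refine ⟨?_, ?_, ?_, ?_⟩
  · intro s hs
    rcases Finset.mem_insert.1 hs with rfl | hs
    · omega
    · exact ⟨by linarith [(h.1 s hs).1], (h.1 s hs).2⟩
  · intro s hs hs'
    rcases Finset.mem_insert.1 hs with rfl | hs <;> rcases Finset.mem_insert.1 hs' with h3 | h3
    · omega
    · exact h2 h3
    · apply h2; rw [← h3]; simpa using hs
    · exact h.2.1 s hs h3
  · rw [Finset.card_insert_of_notMem h1, h.2.2.1]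
  · intro a ha han
    rcases eq_or_lt_of_le ha with rfl | ha
    · have := Finset.card_filter_le (insert e T) (fun s => c ≤ |s|)
      rw [Finset.card_insert_of_notMem h1, h.2.2.1] at this
      omega
    · rw [Finset.filter_insert, if_neg (by omega)]
      exact h.2.2.2 a (by omega) han

lemma Qp_down {n c : ℤ} {d : ℕ} {T : Finset ℤ} (h : Qp n c d T)
    (h1 : c ∉ T) (h2 : -c ∉ T) : Qp n (c+1) d T := by
  refine ⟨fun s hs => ⟨?_, (h.1 s hs).2⟩, h.2.1, h.2.2.1, fun a ha han => h.2.2.2 a (by omega) han⟩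
  have := (h.1 s hs).1
  rcases eq_or_lt_of_le this with h3 | h3
  · rcases abs_choice s with h4 | h4 <;> rw [h4] at h3
    · exact absurd (h3 ▸ hs) h1
    · exact absurd (by rw [h3]; simpa using hs) h2
  · omega

lemma Qp_erase {n c : ℤ} {d : ℕ} {T : Finset ℤ} (h : Qp n c (d+1) T)
    (e : ℤ) (he : |e| = c) (hm : e ∈ T) : Qp n (c+1) d (T.erase e) := by
  have h2 := h.2.1 e hm
  refine ⟨?_, ?_, ?_, ?_⟩
  · intro s hs
    have h3 := Finset.mem_of_mem_erase hs
    refine ⟨?_, (h.1 s h3).2⟩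
    rcases eq_or_lt_of_le (h.1 s h3).1 with h4 | h4
    · rw [← he] at h4
      rcases abs_eq_abs.1 h4 with h5 | h5
      · subst h5; simp at hs
      · subst h5; simp at h2; exact absurd h3 h2
    · omega
  · intro s hs hs'
    exact h.2.1 s (Finset.mem_of_mem_erase hs) (Finset.mem_of_mem_erase hs')
  · rw [Finset.card_erase_of_mem hm, h.2.2.1]; rfl
  · intro a ha han
    refine le_trans ?_ (h.2.2.2 a (by omega) han)
    have : (Finset.filter (fun s => a ≤ |s|) (T.erase e)).card ≤
      (Finset.filter (fun s => a ≤ |s|) T).card :=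
      Finset.card_le_card (Finset.filter_subset_filter _ (Finset.erase_subset _ _))
    omega

lemma Bp_rec (n c : ℤ) (d : ℕ) (hc : 1 ≤ c) (hd : 2 * ((d+1 : ℕ):ℤ) + c ≤ n) :
    {T | Bp n c (d+1) T} = {T | Bp n (c+1) (d+1) T} ∪ (insert (-c)) '' {T | Bp n (c+1) d T} := by
  have hcc : |-c| = c := by rw [abs_neg, abs_of_pos]; omega
  ext T
  simp only [Set.mem_setOf_eq, Set.mem_union, Set.mem_image]
  constructor
  · rintro ⟨h, hn⟩
    by_cases h1 : -c ∈ T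
    · right
      refine ⟨T.erase (-c), ⟨Qp_erase h _ hcc h1, fun s hs => hn s (Finset.mem_of_mem_erase hs)⟩,
        Finset.insert_erase h1⟩
    · left
      exact ⟨Qp_down h (fun h2 => by have := hn _ h2; omega) h1, hn⟩
  · rintro (⟨h, hn⟩ | ⟨T, ⟨h, hn⟩, rfl⟩)
    · exact ⟨Qp_up hd h, hn⟩
    · refine ⟨Qp_insert hc hd h _ hcc, ?_⟩
      intro s hs
      rcases Finset.mem_insert.1 hs with rfl | hs
      · omega
      · exact hn s hs

lemma Wp_rec (n c : ℤ) (d : ℕ) (hc : 1 ≤ c) (hd : 2 * ((d+1 : ℕ):ℤ) + c ≤ n) :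
    {T | Wp n c (d+1) T} = {T | Bp n (c+1) (d+1) T} ∪ ((insert (-c)) '' {T | Wp n (c+1) d T} ∪
      (insert c) '' {T | Wp n (c+1) d T}) := by
  have hcc : |-c| = c := by rw [abs_neg, abs_of_pos]; omega
  have hcc' : |c| = c := by rw [abs_of_pos]; omega
  have key1 : ∀ T e, |e| = c → e ∈ T → Wp n c (d+1) T → Wp n (c+1) d (T.erase e) := by
    rintro T e he heT ⟨h, hn⟩
    refine ⟨Qp_erase h e he heT, ?_⟩
    intro s hs hs0 t ht hts
    have := hn s (Finset.mem_of_mem_erase hs) hs0 t (by omega) hts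
    have : t ≠ e := by rintro rfl; rw [abs_of_pos (by omega)] at he; omega
    have : -t ≠ e := by rintro rfl; rw [abs_neg, abs_of_pos (by omega)] at he; omega
    simp_all
  have key2 : ∀ T e, |e| = c → Wp n (c+1) d T → Wp n c (d+1) (insert e T) := by
    rintro T e he ⟨h, hn⟩
    have he' : e = c ∨ e = -c := by
      rcases abs_choice e with h4 | h4 <;> omega
    refine ⟨Qp_insert hc hd h e he, ?_⟩
    intro s hs hs0 t ht hts
    rcases eq_or_lt_of_le ht with rfl | ht
    · rcases he' with rfl | rfl <;> simp
    · rcases Finset.mem_insert.1 hs with rfl | hs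
      · omega
      · rcases hn s hs hs0 t (by omega) hts with h5 | h5 <;> simp [h5]
  ext T
  simp only [Set.mem_setOf_eq, Set.mem_union, Set.mem_image]
  constructor
  · intro hW
    by_cases h1 : -c ∈ T
    · right; left
      exact ⟨T.erase (-c), key1 T _ hcc h1 hW, Finset.insert_erase h1⟩
    by_cases h2 : c ∈ T
    · right; right
      exact ⟨T.erase c, key1 T _ hcc' h2 hW, Finset.insert_erase h2⟩
    left
    refine ⟨Qp_down hW.1 h2 h1, ?_⟩
    intro s hs
    by_contra h3
    have h4 := (hW.1.1 s hs).1
    have : s ≠ 0 := by rintro rfl; simp at h4; omega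
    rw [abs_of_pos (by omega)] at h4
    rcases hW.2 s hs (by omega) c le_rfl h4 with h5 | h5
    · exact h2 h5
    · exact h1 h5
  · rintro (⟨h, hn⟩ | ⟨T, h, rfl⟩ | ⟨T, h, rfl⟩)
    · exact ⟨Qp_up hd h, fun s hs h0 => by have := hn s hs; omega⟩
    · exact key2 T _ hcc h
    · exact key2 T _ hcc' h

lemma insert_inj {P : Finset ℤ → Prop} (e : ℤ) (h : ∀ T, P T → e ∉ T) :
    ((insert e) '' {T | P T}).ncard = {T | P T}.ncard := by
  apply Set.ncard_image_of_injOn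
  intro T hT T' hT' h3
  have := congrArg (fun X => Finset.erase X e) h3
  simpa [Finset.erase_insert, h T hT, h T' hT'] using this

lemma Bp_card_rec (n c : ℤ) (d : ℕ) (hc : 1 ≤ c) (hd : 2 * ((d+1 : ℕ):ℤ) + c ≤ n) :
    {T | Bp n c (d+1) T}.ncard = {T | Bp n (c+1) (d+1) T}.ncard + {T | Bp n (c+1) d T}.ncard := by
  have hcc : |-c| = c := by rw [abs_neg, abs_of_pos]; omega
  rw [Bp_rec n c d hc hd, Set.ncard_union_eq _ (Bp_finite _ _ _) ((Bp_finite _ _ _).image _),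
    insert_inj]
  · intro T hT; exact Qp_notMem hT.1 _ hcc
  · rw [Set.disjoint_left]
    rintro _ hT ⟨T, hT', rfl⟩
    exact Qp_notMem hT.1 _ hcc (Finset.mem_insert_self _ _)

lemma Wp_card_rec (n c : ℤ) (d : ℕ) (hc : 1 ≤ c) (hd : 2 * ((d+1 : ℕ):ℤ) + c ≤ n) :
    {T | Wp n c (d+1) T}.ncard =
      {T | Bp n (c+1) (d+1) T}.ncard + 2 * {T | Wp n (c+1) d T}.ncard := by
  have hcc : |-c| = c := by rw [abs_neg, abs_of_pos]; omega
  have hcc' : |c| = c := by rw [abs_of_pos]; omega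
  rw [Wp_rec n c d hc hd, Set.ncard_union_eq _ (Bp_finite _ _ _)
    (((Wp_finite _ _ _).image _).union ((Wp_finite _ _ _).image _)), Set.ncard_union_eq _
      ((Wp_finite _ _ _).image _) ((Wp_finite _ _ _).image _),
    insert_inj, insert_inj]
  · ring
  · intro T hT; exact Qp_notMem hT.1 _ hcc'
  · intro T hT; exact Qp_notMem hT.1 _ hcc
  · rw [Set.disjoint_left]
    rintro _ ⟨T, hT, rfl⟩ ⟨T', hT', h⟩
    have : c ∈ insert (-c) T := by rw [← h]; simp
    rcases Finset.mem_insert.1 this with h1 | h1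
    · omega
    · exact Qp_notMem hT.1 _ hcc' h1
  · rw [Set.disjoint_left]
    rintro _ hT (⟨T, hT', rfl⟩ | ⟨T, hT', rfl⟩)
    · exact Qp_notMem hT.1 _ hcc (Finset.mem_insert_self _ _)
    · exact Qp_notMem hT.1 _ hcc' (Finset.mem_insert_self _ _)

lemma Qp_empty (n c : ℤ) : Qp n c 0 ∅ := by
  refine ⟨by simp, by simp, by simp, by simp⟩

lemma Bp_zero (n c : ℤ) : {T | Bp n c 0 T}.ncard = 1 := by
  rw [Set.ncard_eq_one]
  refine ⟨∅, ?_⟩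
  ext T
  simp only [Set.mem_setOf_eq, Set.mem_singleton_iff]
  constructor
  · intro h; exact Finset.card_eq_zero.1 h.1.2.2.1
  · rintro rfl; exact ⟨Qp_empty n c, by simp⟩

lemma Wp_zero (n c : ℤ) : {T | Wp n c 0 T}.ncard = 1 := by
  rw [Set.ncard_eq_one]
  refine ⟨∅, ?_⟩
  ext T
  simp only [Set.mem_setOf_eq, Set.mem_singleton_iff]
  constructor
  · intro h; exact Finset.card_eq_zero.1 h.1.2.2.1
  · rintro rfl; exact ⟨Qp_empty n c, by simp⟩

lemma Bp_none (n c : ℤ) (d : ℕ) (hcn : c ≤ n) (hd : n < 2 * (d:ℤ) + c) :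
    {T | Bp n c d T}.ncard = 0 := by
  convert Set.ncard_empty (Finset ℤ)
  ext T
  simp only [Set.mem_setOf_eq, Set.mem_empty_iff_false, iff_false]
  rintro ⟨h, -⟩
  have := h.2.2.2 c le_rfl hcn
  rw [Finset.filter_true_of_mem (fun s hs => (h.1 s hs).1), h.2.2.1] at this
  omega

lemma Bp_card (n : ℤ) (m : ℕ) : ∀ (c : ℤ) (d : ℕ), 1 ≤ c → c + m = n → 2 * (d + 1) ≤ m + 1 →
    {T | Bp n c (d+1) T}.ncard + Nat.choose m d = Nat.choose m (d+1) := by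
  induction m with
  | zero => intro c d _ _ h; omega
  | succ m ih =>
    intro c d hc hcm hd
    rcases eq_or_lt_of_le hd with h | h
    · rw [Bp_none _ _ _ (by omega) (by push_cast at *; omega), zero_add]
      exact Nat.choose_symm_of_eq_add (by omega)
    · rw [Bp_card_rec _ _ _ hc (by push_cast at *; omega)]
      have h1 := ih (c+1) d (by omega) (by push_cast at *; omega) (by omega)
      cases d with
      | zero =>
        rw [Bp_zero]
        simp at *
        omega
      | succ d =>
        have h2 := ih (c+1) d (by omega) (by push_cast at *; omega) (by omega)
        rw [Nat.choose_succ_succ m (d+1), Nat.choose_succ_succ m d]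
        simp only [Nat.succ_eq_add_one] at *
        omega

lemma Wp_card (n : ℤ) (m : ℕ) : ∀ (c : ℤ) (d : ℕ), 1 ≤ c → c + m = n → 2 * d ≤ m →
    {T | Wp n c d T}.ncard = Nat.choose m d := by
  induction m with
  | zero =>
    intro c d _ _ h
    obtain rfl : d = 0 := by omega
    rw [Wp_zero]; rfl
  | succ m ih =>
    intro c d hc hcm hd
    cases d with
    | zero => rw [Wp_zero]; simp
    | succ d =>
      rw [Wp_card_rec _ _ _ hc (by push_cast at *; omega),
        ih (c+1) d (by omega) (by push_cast at *; omega) (by omega)]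
      have h2 := Bp_card n m (c+1) d (by omega) (by push_cast at *; omega) (by omega)
      rw [Nat.choose_succ_succ m d]
      simp only [Nat.succ_eq_add_one] at *
      omega

/-- Explicit description of the bad sets. -/
def Bad (k : ℕ) (S : Finset ℤ) : Prop :=
  Wp (2 * k + 1) 1 k S ∧ (1 ∈ S ∨ -1 ∈ S) ∧ Even (S.filter (fun s => 0 < s)).card

lemma Wp_rec_mem (n c : ℤ) (d : ℕ) (hc : 1 ≤ c) (hd : 2 * ((d+1 : ℕ):ℤ) + c ≤ n) (T) :
    Wp n c (d+1) T ↔ T ∈ {T | Bp n (c+1) (d+1) T} ∪ ((insert (-c)) '' {T | Wp n (c+1) d T} ∪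
      (insert c) '' {T | Wp n (c+1) d T}) := by
  rw [← Wp_rec n c d hc hd]; rfl

lemma Bad_eq (k : ℕ) : {S | Bad (k+1) S} =
    (fun T => if Even (T.filter (fun s => 0 < s)).card then insert (-1) T else insert 1 T) ''
      {T : Finset ℤ | Wp (2 * (k+1:ℕ) + 1) (1+1) k T} := by
  ext S
  simp only [Set.mem_setOf_eq, Set.mem_image, Bad]
  rw [Wp_rec_mem _ _ _ le_rfl (by push_cast; omega)]
  simp only [Set.mem_setOf_eq, Set.mem_union, Set.mem_image]
  have e1 : ∀ T : Finset ℤ, Finset.filter (fun s => 0 < s) (insert (-1) T) =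
    Finset.filter (fun s => 0 < s) T := by intro T; rw [Finset.filter_insert]; simp
  have e2 : ∀ T : Finset ℤ, 1 ∉ T → (Finset.filter (fun s => 0 < s) (insert 1 T)).card =
    (Finset.filter (fun s => 0 < s) T).card + 1 := by
    intro T h; rw [Finset.filter_insert]; simp [h]
  constructor
  · rintro ⟨h, h1, hev⟩
    rcases h with h | ⟨T, hT, rfl⟩ | ⟨T, hT, rfl⟩
    · rcases h1 with h1 | h1
      · exact absurd h1 (Qp_notMem h.1 1 (by simp))
      · exact absurd h1 (Qp_notMem h.1 (-1) (by simp))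
    · refine ⟨T, hT, ?_⟩
      rw [e1] at hev
      rw [if_pos hev]
    · refine ⟨T, hT, ?_⟩
      rw [e2 _ (Qp_notMem hT.1 1 (by simp)), Nat.even_add_one] at hev
      rw [if_neg hev]
  · rintro ⟨T, hT, rfl⟩
    split_ifs with h
    · exact ⟨Or.inr (Or.inl ⟨T, hT, rfl⟩), by simp, by rwa [e1]⟩
    · refine ⟨Or.inr (Or.inr ⟨T, hT, rfl⟩), by simp, ?_⟩
      rw [e2 _ (Qp_notMem hT.1 1 (by simp)), Nat.even_add_one]
      exact h

lemma Bad_card (k : ℕ) (hk : 1 ≤ k) : {S | Bad k S}.ncard = Nat.choose (2 * k - 1) k := by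
  obtain ⟨k, rfl⟩ : ∃ j, k = j + 1 := ⟨k - 1, by omega⟩
  rw [Bad_eq, Set.ncard_image_of_injOn, Wp_card _ (2*k+1) _ _ (by omega) (by push_cast; ring)
    (by omega)]
  · rw [show 2 * (k+1) - 1 = 2 * k + 1 by omega]
    exact Nat.choose_symm_of_eq_add (by omega)
  · have key : ∀ T : Finset ℤ, T ∈ {T : Finset ℤ | Wp (2 * (k+1:ℕ) + 1) (1+1) k T} →
      (((if Even (T.filter (fun s => 0 < s)).card then insert (-1) T else insert 1 T).erase 1).erase
        (-1)) = T := by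
      intro T hT
      have h1 := Qp_notMem hT.1 1 (by simp)
      have h2 := Qp_notMem hT.1 (-1) (by simp)
      split_ifs <;> ext x <;> simp <;> grind
    intro T hT T' hT' h
    rw [← key T hT, ← key T' hT']
    dsimp only at h
    rw [h]

def RR (n : ℕ) (S V : Finset ℤ) : Prop :=
  Disjoint S V ∧ S.card + V.card = n ∧ S.card + 1 ≤ V.card ∧
  (∀ x ∈ S ∪ V, 1 ≤ |x| ∧ |x| ≤ (n:ℤ)) ∧ (∀ x ∈ S ∪ V, -x ∉ S ∪ V) ∧
  ∀ p ∈ S, (S.filter (fun q => q ≤ p)).card + 1 ≤ (V.filter (fun v => v < p)).card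

lemma enum_finset (S : Finset ℤ) : ∃ s : ℕ → ℤ, (∀ i j, i < j → j < S.card → s i < s j) ∧
    (∀ i < S.card, s i ∈ S) ∧ ∀ x ∈ S, ∃ i < S.card, s i = x := by
  let e := S.orderEmbOfFin rfl
  refine ⟨fun i => if h : i < S.card then e ⟨i, h⟩ else 0, ?_, ?_, ?_⟩
  · intro i j hij hj
    simp only [hj, hij.trans hj, dite_true]
    exact e.strictMono hij
  · intro i hi
    simp only [hi, dite_true]
    exact S.orderEmbOfFin_mem rfl _
  · intro x hx
    have : x ∈ Set.range e := by rw [Finset.range_orderEmbOfFin]; exact hx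
    obtain ⟨i, rfl⟩ := this
    exact ⟨i, i.2, by simp⟩

lemma RR_to_word (n : ℕ) (S V : Finset ℤ) (h : RR n S V) :
    ∃ w : Fin n → ℤ, IsSignedPerm n w ∧
      (Finset.univ.filter fun i => w i < 0).card = ((S ∪ V).filter (fun x => x < 0)).card ∧
      PinSet n w = ↑S := by
  obtain ⟨hdis, hcard, hle, habs, hneg, hcond⟩ := h
  obtain ⟨s, smono, smem, ssurj⟩ := enum_finset S
  obtain ⟨v, vmono, vmem, vsurj⟩ := enum_finset V
  set m := S.card with hm
  have hsv : ∀ j < m, v (j+1) < s j := by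
    intro j hj
    have h1 := hcond (s j) (smem j hj)
    have h2 : j + 1 ≤ (S.filter (fun q => q ≤ s j)).card := by
      have : ((Finset.range (j+1)).image s).card = j + 1 := by
        rw [Finset.card_image_of_injOn, Finset.card_range]
        intro a ha b hb hab
        simp only [Finset.coe_range, Set.mem_Iio] at ha hb
        rcases lt_trichotomy a b with h | h | h
        · have := smono a b h (by omega); omega
        · exact h
        · have := smono b a h (by omega); omega
      rw [← this]
      apply Finset.card_le_card
      intro x hx
      simp only [Finset.mem_image, Finset.mem_range] at hx
      obtain ⟨a, ha, rfl⟩ := hx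
      rw [Finset.mem_filter]
      refine ⟨smem a (by omega), ?_⟩
      rcases eq_or_lt_of_le (Nat.lt_succ_iff.1 ha) with rfl | h
      · exact le_rfl
      · exact (smono a j h hj).le
    by_contra h3
    have h4 : (V.filter (fun x => x < s j)).card ≤ j + 1 := by
      calc _ ≤ ((Finset.range (j+1)).image v).card := by
            apply Finset.card_le_card
            intro x hx
            rw [Finset.mem_filter] at hx
            obtain ⟨a, ha, rfl⟩ := vsurj x hx.1
            simp only [Finset.mem_image, Finset.mem_range]
            refine ⟨a, ?_, rfl⟩
            by_contra h5
            rcases eq_or_lt_of_le (not_lt.1 h5) with rfl | h6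
            · exact h3 hx.2
            · have := vmono _ _ h6 ha; omega
        _ ≤ _ := Finset.card_image_le
        _ = _ := Finset.card_range _
    omega
  let f : ℕ → ℤ := fun i => if i < 2 * m ∧ i % 2 = 1 then s (i/2) else
    if i ≤ 2 * m then v (i/2) else v (i - m)
  have f1 : ∀ j < m, f (2*j+1) = s j := by
    intro j hj
    have : (2*j+1)/2 = j := by omega
    simp only [f]
    rw [if_pos (by omega), this]
  have f2 : ∀ j ≤ m, f (2*j) = v j := by
    intro j hj
    have : (2*j)/2 = j := by omega
    simp only [f]
    rw [if_neg (by omega), if_pos (by omega), this]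
  have f3 : ∀ r, f (2*m+r) = v (m+r) := by
    intro r
    rcases Nat.eq_zero_or_pos r with rfl | hr
    · exact f2 m le_rfl
    · have : 2*m+r-m = m+r := by omega
      simp only [f]
      rw [if_neg (by omega), if_neg (by omega), this]
  have cases : ∀ i, (∃ j < m, i = 2*j+1) ∨ (∃ j < m, i = 2*j) ∨ ∃ r, i = 2*m+r := by
    intro i
    rcases lt_or_ge i (2*m) with h | h
    · rcases Nat.even_or_odd' i with ⟨j, h1 | h1⟩
      · right; left; exact ⟨j, by omega, h1⟩
      · left; exact ⟨j, by omega, h1⟩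
    · right; right; exact ⟨i - 2*m, by omega⟩
  have fmem : ∀ i < n, f i ∈ S ∪ V := by
    intro i hi
    rw [Finset.mem_union]
    rcases cases i with ⟨j, hj, rfl⟩ | ⟨j, hj, rfl⟩ | ⟨r, rfl⟩
    · left; rw [f1 j hj]; exact smem j hj
    · right; rw [f2 j hj.le]; exact vmem j (by omega)
    · right; rw [f3]; exact vmem _ (by omega)
  let w : Fin n → ℤ := fun i => f i
  have wimg : Finset.univ.image w = S ∪ V := by
    apply Finset.Subset.antisymm
    · intro x hx
      simp only [Finset.mem_image, Finset.mem_univ, true_and] at hx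
      obtain ⟨i, rfl⟩ := hx
      exact fmem i i.2
    · intro x hx
      simp only [Finset.mem_image, Finset.mem_univ, true_and]
      rcases Finset.mem_union.1 hx with hx | hx
      · obtain ⟨j, hj, rfl⟩ := ssurj x hx
        exact ⟨⟨2*j+1, by omega⟩, f1 j hj⟩
      · obtain ⟨j, hj, rfl⟩ := vsurj x hx
        rcases le_or_gt j m with h | h
        · exact ⟨⟨2*j, by omega⟩, f2 j h⟩
        · refine ⟨⟨2*m+(j-m), by omega⟩, ?_⟩
          show f (2*m+(j-m)) = _
          rw [f3, show m + (j-m) = j by omega]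
  have winj : Function.Injective w := by
    rw [← Set.injOn_univ, ← Finset.coe_univ]
    apply Finset.injOn_of_card_image_eq
    rw [wimg, Finset.card_union_of_disjoint hdis, hcard]; simp
  refine ⟨w, ⟨fun i => habs _ (fmem i i.2), ?_⟩, ?_, ?_⟩
  · intro i j hij
    rcases abs_eq_abs.1 hij with h | h
    · exact winj h
    · exfalso
      apply hneg _ (fmem j j.2)
      have := fmem i i.2
      change w i ∈ S ∪ V at this
      rw [h] at this
      exact this
  · rw [← wimg, Finset.filter_image, Finset.card_image_of_injective _ winj]
  · ext x
    simp only [PinSet, Set.mem_setOf_eq, Finset.mem_coe]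
    constructor
    · rintro ⟨i, h0, h2, rfl, h3, h4⟩
      change f (i+1) < f i at h4
      change f i ∈ S
      rcases cases i with ⟨j, hj, rfl⟩ | ⟨j, hj, rfl⟩ | ⟨r, rfl⟩
      · rw [f1 j hj]; exact smem j hj
      · rw [f2 j hj.le, f1 j hj] at h4
        have := hsv j hj
        have := vmono j (j+1) (by omega) (by omega)
        omega
      · rw [add_assoc, f3, f3] at h4
        have := vmono (m+r) (m+(r+1)) (by omega) (by omega)
        omega
    · intro hx
      obtain ⟨j, hj, rfl⟩ := ssurj x hx
      refine ⟨2*j+1, by omega, by omega, f1 j hj, ?_, ?_⟩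
      · change f (2*j) < f (2*j+1)
        rw [f1 j hj, f2 j hj.le]
        have := hsv j hj
        have := vmono j (j+1) (by omega) (by omega)
        omega
      · change f (2*(j+1)) < f (2*j+1)
        rw [f1 j hj, f2 (j+1) (by omega)]
        exact hsv j hj

lemma word_to_RR (n : ℕ) (hn : 1 ≤ n) (S : Finset ℤ) (w : Fin n → ℤ) (hw : IsSignedPerm n w)
    (hS : PinSet n w = ↑S) :
    ∃ V, RR n S V ∧ 
      (Finset.univ.filter fun i => w i < 0).card = ((S ∪ V).filter (fun x => x < 0)).card := by
  have winj : Function.Injective w := fun i j h => hw.2 (by simp [h])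
  let f : ℕ → ℤ := fun i => if h : i < n then w ⟨i, h⟩ else 0
  have fw : ∀ i (h : i < n), w ⟨i, h⟩ = f i := by intro i h; simp [f, h]
  have finj : ∀ i j, i < n → j < n → f i = f j → i = j := by
    intro i j hi hj h
    rw [← fw i hi, ← fw j hj] at h
    simpa using winj h
  have pin : ∀ x, x ∈ S ↔ ∃ i, 0 < i ∧ i + 1 < n ∧ f i = x ∧ f (i-1) < f i ∧ f (i+1) < f i := by
    intro x
    rw [← Finset.mem_coe, ← hS]
    simp only [PinSet, Set.mem_setOf_eq, fw]
    constructor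
    · rintro ⟨i, h0, h1, h⟩; exact ⟨i, h0, h1, h⟩
    · rintro ⟨i, h0, h1, h⟩; exact ⟨i, h0, h1, h⟩
  have hsub : S ⊆ Finset.univ.image w := by
    intro x hx
    obtain ⟨i, h0, h1, h, -⟩ := (pin x).1 hx
    simp only [Finset.mem_image, Finset.mem_univ, true_and]
    exact ⟨⟨i, by omega⟩, by rw [fw, h]⟩
  have hun : S ∪ (Finset.univ.image w \ S) = Finset.univ.image w :=
    Finset.union_sdiff_of_subset hsub
  have hcard : S.card + (Finset.univ.image w \ S).card = n := by
    rw [← Finset.card_union_of_disjoint Finset.disjoint_sdiff, hun,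
      Finset.card_image_of_injective _ winj]; simp
  have hcond : ∀ p ∈ S, (S.filter (fun q => q ≤ p)).card + 1 ≤
      ((Finset.univ.image w \ S).filter (fun v => v < p)).card := by
    intro p hp
    let I : Finset ℕ := (Finset.range n).filter
      (fun i => 0 < i ∧ i + 1 < n ∧ f (i-1) < f i ∧ f (i+1) < f i ∧ f i ≤ p)
    have hI : ∀ i, i ∈ I ↔ 0 < i ∧ i + 1 < n ∧ f (i-1) < f i ∧ f (i+1) < f i ∧ f i ≤ p := by
      intro i
      simp only [I, Finset.mem_filter, Finset.mem_range]
      constructor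
      · exact fun h => h.2
      · exact fun h => ⟨by omega, h⟩
    have hIc : (S.filter (fun q => q ≤ p)).card ≤ I.card := by
      calc _ ≤ (I.image f).card := by
            apply Finset.card_le_card
            intro x hx
            rw [Finset.mem_filter] at hx
            obtain ⟨i, h0, h1, h, h2, h3⟩ := (pin x).1 hx.1
            rw [Finset.mem_image]
            exact ⟨i, (hI i).2 ⟨h0, h1, h2, h3, by rw [h]; exact hx.2⟩, h⟩
        _ ≤ _ := Finset.card_image_le
    have hne : I.Nonempty := by
      obtain ⟨i, h0, h1, h, h2, h3⟩ := (pin p).1 hp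
      exact ⟨i, (hI i).2 ⟨h0, h1, h2, h3, h.le⟩⟩
    let i0 := I.min' hne
    have hi0 := (hI i0).1 (I.min'_mem hne)
    let J : Finset ℕ := insert (i0 - 1) (I.image (· + 1))
    have hJc : J.card = I.card + 1 := by
      rw [Finset.card_insert_of_notMem, Finset.card_image_of_injective _ (add_left_injective 1)]
      intro h
      rw [Finset.mem_image] at h
      obtain ⟨i, hi, h⟩ := h
      have : i0 ≤ i := I.min'_le i hi
      omega
    have hJ : ∀ j ∈ J, j < n ∧ f j < p ∧ f j ∉ S := by
      intro j hj
      rcases Finset.mem_insert.1 hj with rfl | hj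
      · refine ⟨by omega, by omega, ?_⟩
        intro h
        obtain ⟨i, h0, h1, h2, h3, h4⟩ := (pin _).1 h
        have := finj i _ (by omega) (by omega) h2
        subst this
        rw [show i0 - 1 + 1 = i0 by omega] at h4
        omega
      · obtain ⟨i, hi, rfl⟩ := Finset.mem_image.1 hj
        have hi := (hI i).1 hi
        refine ⟨by omega, by omega, ?_⟩
        intro h
        obtain ⟨i', h0, h1, h2, h3, h4⟩ := (pin _).1 h
        have := finj i' _ (by omega) (by omega) h2
        subst this
        simp only [Nat.add_sub_cancel] at h3
        omega
    calc _ ≤ J.card := by omega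
      _ = (J.image f).card := by
        rw [Finset.card_image_of_injOn]
        intro a ha b hb hab
        exact finj a b (hJ a ha).1 (hJ b hb).1 hab
      _ ≤ _ := by
        apply Finset.card_le_card
        intro x hx
        obtain ⟨j, hj, rfl⟩ := Finset.mem_image.1 hx
        obtain ⟨h1, h2, h3⟩ := hJ j hj
        simp only [Finset.mem_filter, Finset.mem_sdiff, Finset.mem_image, Finset.mem_univ, true_and]
        exact ⟨⟨⟨⟨j, h1⟩, fw j h1⟩, h3⟩, h2⟩
  refine ⟨Finset.univ.image w \ S, ⟨Finset.disjoint_sdiff, hcard, ?_, ?_, ?_, hcond⟩, ?_⟩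
  · rcases S.eq_empty_or_nonempty with rfl | hne
    · simp only [Finset.card_empty] at *; omega
    · have h1 := hcond _ (S.max'_mem hne)
      rw [Finset.filter_true_of_mem (fun q hq => S.le_max' q hq)] at h1
      exact h1.trans (Finset.card_filter_le _ _)
  · rw [hun]
    intro x hx
    obtain ⟨i, -, rfl⟩ := Finset.mem_image.1 hx
    exact hw.1 i
  · rw [hun]
    intro x hx hx'
    obtain ⟨i, -, rfl⟩ := Finset.mem_image.1 hx
    obtain ⟨j, -, h⟩ := Finset.mem_image.1 hx'
    have : i = j := hw.2 (by simp [h])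
    subst this
    have h2 := (hw.1 i).1
    have : w i = 0 := by omega
    rw [this] at h2
    simp at h2
  · rw [hun, Finset.filter_image, Finset.card_image_of_injective _ winj]

lemma APSB_iff (n : ℕ) (hn : 1 ≤ n) (S : Finset ℤ) : APSB n S ↔ ∃ V, RR n S V := by
  constructor
  · rintro ⟨w, hw, h⟩
    obtain ⟨V, hV, -⟩ := word_to_RR n hn S w hw h
    exact ⟨V, hV⟩
  · rintro ⟨V, hV⟩
    obtain ⟨w, hw, -, h⟩ := RR_to_word n S V hV
    exact ⟨w, hw, h⟩

lemma APSD_iff (n : ℕ) (hn : 1 ≤ n) (S : Finset ℤ) : APSD n S ↔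
    ∃ V, RR n S V ∧ Even ((S ∪ V).filter (fun x => x < 0)).card := by
  constructor
  · rintro ⟨w, hw, he, h⟩
    obtain ⟨V, hV, h2⟩ := word_to_RR n hn S w hw h
    exact ⟨V, hV, h2 ▸ he⟩
  · rintro ⟨V, hV, he⟩
    obtain ⟨w, hw, h2, h⟩ := RR_to_word n S V hV
    exact ⟨w, hw, h2.symm ▸ he, h⟩

/-- Absolute values not used by `S`. -/
noncomputable def CC (n : ℕ) (S : Finset ℤ) : Finset ℤ :=
  (Finset.Icc 1 (n:ℤ)).filter (fun c => c ∉ S ∧ -c ∉ S)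

lemma mem_CC (n : ℕ) (S : Finset ℤ) (c : ℤ) :
    c ∈ CC n S ↔ 1 ≤ c ∧ c ≤ n ∧ c ∉ S ∧ -c ∉ S := by
  simp [CC, and_assoc]

/-- The all-negative choice of non-pinnacles. -/
noncomputable def VV (n : ℕ) (S : Finset ℤ) : Finset ℤ := (CC n S).image (fun c => -c)

lemma mem_VV (n : ℕ) (S : Finset ℤ) (c : ℤ) :
    c ∈ VV n S ↔ 1 ≤ -c ∧ -c ≤ n ∧ c ∉ S ∧ -c ∉ S := by
  simp only [VV, Finset.mem_image, mem_CC]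
  constructor
  · rintro ⟨a, h, rfl⟩; simp only [neg_neg]; tauto
  · intro h; exact ⟨-c, by simp only [neg_neg]; tauto, by simp⟩

lemma abs_injOn (S : Finset ℤ) (h2 : ∀ s ∈ S, -s ∉ S) : Set.InjOn (fun s : ℤ => |s|) S := by
  intro a ha b hb hab
  rcases abs_eq_abs.1 hab with h | h
  · exact h
  · subst h; exact absurd ha (h2 b hb)

lemma cnt (n : ℕ) (S : Finset ℤ) (h1 : ∀ s ∈ S, 1 ≤ |s| ∧ |s| ≤ (n:ℤ)) (h2 : ∀ s ∈ S, -s ∉ S)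
    (a : ℤ) (ha : 1 ≤ a) (han : a ≤ n + 1) :
    (((CC n S).filter (fun c => a ≤ c)).card : ℤ) + ((S.filter (fun s => a ≤ |s|)).card : ℤ)
      = n + 1 - a := by
  have e1 : ((S.filter (fun s => a ≤ |s|)).image (fun s : ℤ => |s|)).card =
      (S.filter (fun s => a ≤ |s|)).card := by
    apply Finset.card_image_of_injOn
    exact (abs_injOn S h2).mono (fun x hx => (Finset.mem_filter.1 hx).1)
  have e2 : (CC n S).filter (fun c => a ≤ c) ∪
      ((S.filter (fun s => a ≤ |s|)).image (fun s : ℤ => |s|)) = Finset.Icc a n := by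
    ext x
    simp only [Finset.mem_union, Finset.mem_filter, mem_CC, Finset.mem_image, Finset.mem_Icc]
    constructor
    · rintro (h | ⟨s, ⟨hs, has⟩, rfl⟩)
      · omega
      · exact ⟨has, (h1 s hs).2⟩
    · rintro ⟨hx, hx'⟩
      by_cases h3 : x ∈ S
      · right; exact ⟨x, ⟨h3, by rwa [abs_of_pos (by omega)]⟩, abs_of_pos (by omega)⟩
      by_cases h4 : -x ∈ S
      · right
        exact ⟨-x, ⟨h4, by rwa [abs_neg, abs_of_pos (by omega)]⟩,
          by rw [abs_neg, abs_of_pos (by omega)]⟩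
      · left; exact ⟨⟨by omega, hx', h3, h4⟩, hx⟩
  have e3 : Disjoint ((CC n S).filter (fun c => a ≤ c))
      ((S.filter (fun s => a ≤ |s|)).image (fun s : ℤ => |s|)) := by
    rw [Finset.disjoint_left]
    intro x hx hx'
    simp only [Finset.mem_filter, mem_CC, Finset.mem_image] at hx hx'
    obtain ⟨s, ⟨hs, -⟩, rfl⟩ := hx'
    rcases abs_choice s with h | h <;> rw [h] at hx <;> simp_all
  have := congrArg Finset.card e2
  rw [Finset.card_union_of_disjoint e3, e1, Int.card_Icc] at this
  omega

lemma card_VV (n : ℕ) (S : Finset ℤ) : (VV n S).card = (CC n S).card :=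
  Finset.card_image_of_injective _ neg_injective

lemma card_add (n : ℕ) (S : Finset ℤ) (h1 : ∀ s ∈ S, 1 ≤ |s| ∧ |s| ≤ (n:ℤ))
    (h2 : ∀ s ∈ S, -s ∉ S) : S.card + (VV n S).card = n := by
  have := cnt n S h1 h2 1 le_rfl (by omega)
  rw [Finset.filter_true_of_mem (fun c hc => ((mem_CC n S c).1 hc).1),
    Finset.filter_true_of_mem (fun c hc => (h1 c hc).1)] at this
  rw [card_VV]
  omega

lemma RR_VV (n : ℕ) (S : Finset ℤ) (h1 : ∀ s ∈ S, 1 ≤ |s| ∧ |s| ≤ (n:ℤ))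
    (h2 : ∀ s ∈ S, -s ∉ S) (h3 : S.card + 1 ≤ (VV n S).card)
    (h4 : ∀ p ∈ S, (S.filter (fun q => q ≤ p)).card + 1 ≤
      ((VV n S).filter (fun v => v < p)).card) : RR n S (VV n S) := by
  refine ⟨?_, card_add n S h1 h2, h3, ?_, ?_, h4⟩
  · rw [Finset.disjoint_left]
    intro x hx hx'
    rw [mem_VV] at hx'
    tauto
  · intro x hx
    rcases Finset.mem_union.1 hx with hx | hx
    · exact h1 x hx
    · rw [mem_VV] at hx
      rw [abs_of_neg (by omega)]; omega
  · intro x hx hx'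
    rw [Finset.mem_union, mem_VV] at hx hx'
    have := h2 x
    rw [neg_neg] at hx'
    rcases hx with hx | hx <;> rcases hx' with hx' | hx'
    · tauto
    · tauto
    · tauto
    · omega

lemma RR_down (n : ℕ) (S V : Finset ℤ) (h : RR n S V) : RR n S (VV n S) := by
  obtain ⟨hdis, hcard, hle, habs, hneg, hcond⟩ := h
  have h1 : ∀ s ∈ S, 1 ≤ |s| ∧ |s| ≤ (n:ℤ) := fun s hs => habs s (Finset.mem_union_left _ hs)
  have h2 : ∀ s ∈ S, -s ∉ S :=
    fun s hs h => hneg s (Finset.mem_union_left _ hs) (Finset.mem_union_left _ h)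
  have h5 := card_add n S h1 h2
  apply RR_VV n S h1 h2 (by omega)
  intro p hp
  refine (hcond p hp).trans ?_
  have : ((V.filter (fun v => v < p)).image (fun v => -|v|)).card =
      (V.filter (fun v => v < p)).card := by
    apply Finset.card_image_of_injOn
    have h6 : Set.InjOn (fun s : ℤ => |s|) V := abs_injOn V
      (fun s hs h => hneg s (Finset.mem_union_right _ hs) (Finset.mem_union_right _ h))
    intro a ha b hb hab
    simp only [Finset.coe_filter, Set.mem_setOf_eq] at ha hb
    exact h6 ha.1 hb.1 (by simpa using hab)
  rw [← this]
  apply Finset.card_le_card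
  intro x hx
  obtain ⟨v, hv, rfl⟩ := Finset.mem_image.1 hx
  rw [Finset.mem_filter] at hv ⊢
  obtain ⟨hv, hvp⟩ := hv
  have h7 := habs v (Finset.mem_union_right _ hv)
  have h8 : v ∉ S := fun h => Finset.disjoint_left.1 hdis h hv
  have h9 : -v ∉ S := fun h => hneg v (Finset.mem_union_right _ hv) (Finset.mem_union_left _ h)
  rw [mem_VV, neg_neg]
  refine ⟨⟨h7.1, h7.2, ?_⟩, by have := neg_abs_le v; omega⟩
  rcases abs_choice v with h | h <;> rw [h] <;> simp [h8, h9]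

lemma RR_flip (n : ℕ) (S : Finset ℤ) (h : RR n S (VV n S)) (b : ℤ) (hb : b ∈ CC n S)
    (hmin : ∀ c ∈ CC n S, b ≤ c)
    (hp : ∀ p ∈ S, -b < p → p < b → (S.filter (fun q => q ≤ p)).card + 2 ≤ (VV n S).card) :
    RR n S (insert b ((VV n S).erase (-b))) := by
  obtain ⟨hdis, hcard, hle, habs, hneg, hcond⟩ := h
  have hb' := (mem_CC n S b).1 hb
  have hbV : b ∉ VV n S := by rw [mem_VV]; omega
  have hbV' : -b ∈ VV n S := by rw [mem_VV, neg_neg]; tauto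
  have hVc : (insert b ((VV n S).erase (-b))).card = (VV n S).card := by
    rw [Finset.card_insert_of_notMem (by simp [hbV]), Finset.card_erase_of_mem hbV']
    have : 0 < (VV n S).card := Finset.card_pos.2 ⟨_, hbV'⟩
    omega
  refine ⟨?_, by rw [hVc]; exact hcard, by rw [hVc]; exact hle, ?_, ?_, ?_⟩
  · rw [Finset.disjoint_left] at hdis ⊢
    intro x hx hx'
    rcases Finset.mem_insert.1 hx' with rfl | hx'
    · tauto
    · exact hdis hx (Finset.mem_of_mem_erase hx')
  · intro x hx
    rcases Finset.mem_union.1 hx with hx | hx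
    · exact habs x (Finset.mem_union_left _ hx)
    · rcases Finset.mem_insert.1 hx with rfl | hx
      · rw [abs_of_pos (by omega)]; omega
      · exact habs x (Finset.mem_union_right _ (Finset.mem_of_mem_erase hx))
  · intro x hx hx'
    have key := hneg x
    simp only [Finset.mem_union, Finset.mem_insert, Finset.mem_erase] at hx hx' key
    by_cases hxb : x = b
    · subst hxb
      rcases hx' with h | h | h
      · tauto
      · omega
      · tauto
    by_cases hxb' : -x = b
    · subst hxb'
      simp only [neg_neg] at *
      rcases hx with h | h | h
      · tauto
      · omega
      · tauto
    have hx1 : x ∈ S ∨ x ∈ VV n S := by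
      rcases hx with h | h | h
      · exact Or.inl h
      · exact absurd h hxb
      · exact Or.inr h.2
    have hx2 : -x ∈ S ∨ -x ∈ VV n S := by
      rcases hx' with h | h | h
      · exact Or.inl h
      · exact absurd h hxb'
      · exact Or.inr h.2
    exact key hx1 hx2
  · intro p hpS
    refine le_trans ?_ (b := if -b < p ∧ p < b then (VV n S).card - 1 else
      ((VV n S).filter (fun v => v < p)).card) ?_
    · split_ifs with h
      · have := hp p hpS h.1 h.2
        omega
      · exact hcond p hpS
    · split_ifs with h
      · rw [← Finset.card_erase_of_mem hbV']
        apply Finset.card_le_card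
        intro x hx
        rw [Finset.mem_filter]
        refine ⟨Finset.mem_insert_of_mem hx, ?_⟩
        have hx := Finset.mem_of_mem_erase hx
        obtain ⟨c, hc, rfl⟩ := Finset.mem_image.1 hx
        have := hmin c hc
        show -c < p
        omega
      · by_cases h5 : -b < p
        · have : p ≠ b := by rintro rfl; tauto
          rw [Finset.filter_insert, if_pos (by omega), Finset.filter_erase,
            Finset.card_insert_of_notMem (by simp [hbV]),
            Finset.card_erase_of_mem (by simp [hbV', h5])]
          omega
        · apply Finset.card_le_card
          intro x hx
          rw [Finset.mem_filter] at hx ⊢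
          refine ⟨Finset.mem_insert_of_mem (Finset.mem_erase.2 ⟨by omega, hx.1⟩), hx.2⟩

lemma filter_neg_flip (n : ℕ) (S : Finset ℤ) (b : ℤ) (hb : b ∈ CC n S) :
    ((S ∪ insert b ((VV n S).erase (-b))).filter (fun x => x < 0)).card + 1 =
      ((S ∪ VV n S).filter (fun x => x < 0)).card := by
  have hb' := (mem_CC n S b).1 hb
  have hbV' : -b ∈ VV n S := by rw [mem_VV, neg_neg]; tauto
  have : (S ∪ insert b ((VV n S).erase (-b))).filter (fun x => x < 0) =
      ((S ∪ VV n S).filter (fun x => x < 0)).erase (-b) := by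
    ext x
    simp only [Finset.mem_filter, Finset.mem_union, Finset.mem_insert, Finset.mem_erase]
    constructor
    · rintro ⟨h | h | h, h0⟩
      · refine ⟨?_, Or.inl h, h0⟩
        rintro rfl; tauto
      · omega
      · tauto
    · tauto
  have hm : -b ∈ (S ∪ VV n S).filter (fun x => x < 0) := by
    simp only [Finset.mem_filter, Finset.mem_union, hbV', or_true, true_and]; omega
  rw [this, Finset.card_erase_of_mem hm]
  have : 0 < ((S ∪ VV n S).filter (fun x => x < 0)).card := Finset.card_pos.2 ⟨_, hm⟩
  omega

lemma pos_add_neg (S : Finset ℤ) (h : ∀ s ∈ S, 1 ≤ |s|) :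
    (S.filter (fun s => 0 < s)).card + (S.filter (fun s => s < 0)).card = S.card := by
  rw [← Finset.card_filter_add_card_filter_not (s := S) (fun s => 0 < s)]
  congr 2
  apply Finset.filter_congr
  intro s hs
  have := h s hs
  constructor
  · intro h; omega
  · intro h0
    have : s ≠ 0 := by rintro rfl; simp at this
    omega

lemma bad_iff (k : ℕ) (S : Finset ℤ) :
    (APSB (2 * k + 1) S ∧ ¬ APSD (2 * k + 1) S) ↔ Bad k S := by
  rw [APSB_iff _ (by omega), APSD_iff _ (by omega)]
  set n := 2 * k + 1 with hn
  constructor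
  · rintro ⟨⟨V, hV⟩, hD⟩
    push Not at hD
    have hR := RR_down n S V hV
    have hodd := hD _ hR
    obtain ⟨hdis, hcard, hle, habs, hneg, hcond⟩ := id hR
    have h1 : ∀ s ∈ S, 1 ≤ |s| ∧ |s| ≤ (n:ℤ) := fun s hs => habs s (Finset.mem_union_left _ hs)
    have h2 : ∀ s ∈ S, -s ∉ S :=
      fun s hs h => hneg s (Finset.mem_union_left _ hs) (Finset.mem_union_left _ h)
    have hne : (CC n S).Nonempty := by
      rw [← Finset.card_pos, ← card_VV]; omega
    set b := (CC n S).min' hne with hbdef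
    have hb : b ∈ CC n S := Finset.min'_mem _ _
    have hmin : ∀ c ∈ CC n S, b ≤ c := fun c hc => Finset.min'_le _ _ hc
    have hb' := (mem_CC n S b).1 hb
    have hex : ∃ p ∈ S, -b < p ∧ p < b ∧
        (VV n S).card < (S.filter (fun q => q ≤ p)).card + 2 := by
      by_contra! hcon
      have := hD _ (RR_flip n S hR b hb hmin hcon)
      have h3 := filter_neg_flip n S b hb
      rw [← h3, Nat.even_add_one] at hodd
      exact hodd this
    obtain ⟨p, hpS, hp1, hp2, hp3⟩ := hex
    have h4 := Finset.card_filter_le S (fun q => q ≤ p)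
    have hSk : S.card = k := by omega
    have hmax : ∀ q ∈ S, q ≤ p := by
      have : S.filter (fun q => q ≤ p) = S :=
        Finset.eq_of_subset_of_card_le (Finset.filter_subset _ _) (by omega)
      intro q hq
      rw [← this] at hq
      exact (Finset.mem_filter.1 hq).2
    have hlow : ∀ t, 1 ≤ t → t < b → t ∈ S ∨ -t ∈ S := by
      intro t ht htb
      by_contra! hcon
      have := hmin t ((mem_CC n S t).2 ⟨ht, by omega, hcon⟩)
      omega
    refine ⟨⟨⟨?_, h2, hSk, ?_⟩, ?_⟩, ?_, ?_⟩
    · intro s hs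
      have := h1 s hs
      omega
    · intro a ha han
      have hc := cnt n S h1 h2 a ha (by omega)
      have hPk := Finset.card_filter_le S (fun s => a ≤ |s|)
      by_cases hab : a < b
      · rw [Finset.filter_true_of_mem (fun c hc => by have := hmin c hc; omega), ← card_VV] at hc
        omega
      · rcases (S.filter (fun s => a ≤ |s|)).eq_empty_or_nonempty with he | hne
        · rw [he]; simp; omega
        · set q := (S.filter (fun s => a ≤ |s|)).max' hne with hq
          have hqm := (S.filter (fun s => a ≤ |s|)).max'_mem hne
          rw [← hq, Finset.mem_filter] at hqm
          have hsneg : ∀ s ∈ S, a ≤ |s| → |s| = -s := by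
            intro s hs has
            have := hmax s hs
            rcases abs_choice s with h | h <;> omega
          have hqa := hsneg q hqm.1 hqm.2
          have hcq := hcond q hqm.1
          have e1 : (S.filter (fun s => a ≤ |s|)).card ≤ (S.filter (fun s => s ≤ q)).card := by
            apply Finset.card_le_card
            intro s hs
            exact Finset.mem_filter.2 ⟨(Finset.mem_filter.1 hs).1, Finset.le_max' _ _ hs⟩
          have e2 : ((VV n S).filter (fun v => v < q)).card ≤
              ((CC n S).filter (fun c => a ≤ c)).card := by
            rw [← Finset.card_image_of_injective ((CC n S).filter (fun c => a ≤ c))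
              (neg_injective (G := ℤ))]
            apply Finset.card_le_card
            intro v hv
            rw [Finset.mem_filter] at hv
            obtain ⟨c, hc, rfl⟩ := Finset.mem_image.1 hv.1
            refine Finset.mem_image.2 ⟨c, Finset.mem_filter.2 ⟨hc, ?_⟩, rfl⟩
            have := hv.2
            omega
          omega
    · intro s hs h0 t ht hts
      have := hmax s hs
      exact hlow t ht (by omega)
    · have hp0 : p ≠ 0 := by
        rintro rfl
        have := (h1 0 hpS).1
        simp at this
      exact hlow 1 le_rfl (by omega)
    · have h5 := pos_add_neg S (fun s hs => (h1 s hs).1)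
      rw [Finset.filter_union, Finset.card_union_of_disjoint
        (Finset.disjoint_filter_filter hdis),
        Finset.filter_true_of_mem (s := VV n S) (fun c hc => by
          have := (mem_VV n S c).1 hc; omega)] at hodd
      rw [Nat.even_iff] at *
      omega
  · rintro ⟨⟨⟨h1, h2, hSk, hbal⟩, hpos⟩, hone, hev⟩
    have h1' : ∀ s ∈ S, 1 ≤ |s| ∧ |s| ≤ (n:ℤ) := by
      intro s hs
      have := h1 s hs
      omega
    have hadd := card_add n S h1' h2
    constructor
    · refine ⟨VV n S, RR_VV n S h1' h2 (by omega) ?_⟩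
      intro p hp
      have hp1 := h1' p hp
      by_cases hp0 : 0 < p
      · rw [Finset.filter_true_of_mem (s := VV n S) (fun c hc => by
          have := (mem_VV n S c).1 hc; omega)]
        have := Finset.card_filter_le S (fun q => q ≤ p)
        omega
      · have hpa : |p| = -p := by rcases abs_choice p with h | h <;> omega
        have hc := cnt n S h1' h2 (-p) (by omega) (by omega)
        have hbp := hbal (-p) (by omega) (by omega)
        have e1 : (S.filter (fun q => q ≤ p)).card ≤ (S.filter (fun s => -p ≤ |s|)).card := by
          apply Finset.card_le_card
          intro s hs
          rw [Finset.mem_filter] at hs ⊢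
          refine ⟨hs.1, ?_⟩
          have := neg_abs_le s
          omega
        have e2 : ((CC n S).filter (fun c => -p ≤ c)).card ≤
            ((VV n S).filter (fun v => v < p)).card := by
          rw [← Finset.card_image_of_injective ((CC n S).filter (fun c => -p ≤ c))
              (neg_injective (G := ℤ))]
          apply Finset.card_le_card
          intro v hv
          obtain ⟨c, hc, rfl⟩ := Finset.mem_image.1 hv
          rw [Finset.mem_filter] at hc ⊢
          refine ⟨Finset.mem_image.2 ⟨c, hc.1, rfl⟩, ?_⟩
          have h6 := (mem_CC n S c).1 hc.1
          have : c ≠ -p := by rintro rfl; simp at h6; tauto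
          omega
        omega
    · rintro ⟨V, ⟨hdis, hcard, hle, habs, hneg, hcond⟩, he⟩
      have h5 := pos_add_neg S (fun s hs => (h1 s hs).1)
      have h6 := pos_add_neg V (fun s hs => (habs s (Finset.mem_union_right _ hs)).1)
      rw [Finset.filter_union, Finset.card_union_of_disjoint
        (Finset.disjoint_filter_filter hdis)] at he
      have hVp : 0 < (V.filter (fun s => 0 < s)).card := by
        rw [Nat.even_iff] at *
        omega
      obtain ⟨v, hv⟩ := Finset.card_pos.1 hVp
      rw [Finset.mem_filter] at hv
      have hne : S.Nonempty := by rcases hone with h | h <;> exact ⟨_, h⟩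
      have hm := S.max'_mem hne
      have hcm := hcond _ hm
      rw [Finset.filter_true_of_mem (fun q hq => S.le_max' q hq)] at hcm
      have hfe : V.filter (fun x => x < S.max' hne) = V :=
        Finset.eq_of_subset_of_card_le (Finset.filter_subset _ _) (by omega)
      have hvm : v < S.max' hne := by
        have := hv.1
        rw [← hfe] at this
        exact (Finset.mem_filter.1 this).2
      rcases hpos _ hm (by omega) v (by omega) hvm.le with h | h
      · exact Finset.disjoint_left.1 hdis h hv.1
      · exact hneg v (Finset.mem_union_right _ hv.1) (Finset.mem_union_left _ h)

theorem stmt16 (k : ℕ) (hk : 1 ≤ k) :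
    {S : Finset ℤ | APSB (2 * k + 1) S ∧ ¬ APSD (2 * k + 1) S}.ncard
      = Nat.choose (2 * k - 1) k := by
  rw [← Bad_card k hk]
  congr 1
  ext S
  exact bad_iff k S
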